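/- arXiv:1506.08666 — 2 statements merged into one kernel-verified Lean document; each statement's English description precedes it below -/
import Mathlib

section
/- Let □̃_q^even (resp. □̃_q^odd) denote the subalgebra of □̃_q generated by x₀, x₂ (resp. x₁, x₃), and let C̃ denote the subalgebra of □̃_q generated by the c_i^{±1} (i ∈ ℤ/4ℤ). Let L = F[λ₀^{±1}, λ₁^{±1}, λ₂^{±1}, λ₃^{±1}] denote the Laurent polynomial algebra in four commuting variables over F. Then (i) there exists an F-algebra isomorphism L → C̃ sending λ_i^{±1} ↦ c_i^{±1} for i ∈ ℤ/4ℤ, and (ii) the multiplication map □̃_q^even ⊗ □̃_q^odd ⊗ C̃ → □̃_q, u ⊗ v ⊗ c ↦ uvc, is an isomorphism of F-vector spaces. -/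
/-!
Solving each defining relation for the product of an odd and an even generator gives
`x_j x_k = q^{±2} x_k x_j + (scalar) c_i` for every odd `j` and even `k`. These rules let one move odd
generators to the right of even ones, so the products `u v c` span the algebra (`triSpan_eq_top`).

The rules have no overlaps, so nothing collapses. To see this, let `L` be the Laurent polynomial
algebra and let `□̃_q` act on `V = L⟨x₀, x₂⟩ ⊗_L L⟨x₁, x₃⟩`: each `c_i` acts as the scalar `λ_i`, the
even generators act by left multiplication on the first factor, and an odd generator `y` acts by
`u ⊗ v ↦ σ(u) ⊗ y v + δ(u) ⊗ v`, where `σ` rescales the letters and `δ` is the `σ`-derivation whose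
values on the letters are the correction terms (`oddOp_mul_evenOp`, `rep`). Applied to the vector
`1 ⊗ 1`, a product `u v c` returns `c (u ⊗ v)` (`rep_triple`). As words times Laurent monomials form
an `F`-basis of `V`, the multiplication map is injective (`mulMap3_injective`). The map from `L` onto the
subalgebra of the central generators is injective because `L` acts faithfully on `V`.
-/

noncomputable section

/-- The `q`-Serre expression `u³v − [3]_q u²vu + [3]_q uvu² − vu³`,
where `[3]_q = (q³ − q⁻³)/(q − q⁻¹)`. -/
def qSerre {F : Type*} [Field F] (q : F) {A : Type*} [Ring A] [Algebra F A] (u v : A) : A :=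
  u ^ 3 * v - ((q ^ 3 - q⁻¹ ^ 3) / (q - q⁻¹)) • (u ^ 2 * v * u)
    + ((q ^ 3 - q⁻¹ ^ 3) / (q - q⁻¹)) • (u * v * u ^ 2) - v * u ^ 3
/-- Generator indices for `□̃_q`: `Sum.inl i` is `x_i`, `Sum.inr (Sum.inl i)` is `c_i`,
and `Sum.inr (Sum.inr i)` is `c_i⁻¹`. -/
abbrev BTGen := (ZMod 4) ⊕ ((ZMod 4) ⊕ (ZMod 4))

/-- The free generator corresponding to `x_i`. -/
def btx (F : Type*) [Field F] (i : ZMod 4) : FreeAlgebra F BTGen :=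
  FreeAlgebra.ι F (Sum.inl i)

/-- The free generator corresponding to `c_i`. -/
def btc (F : Type*) [Field F] (i : ZMod 4) : FreeAlgebra F BTGen :=
  FreeAlgebra.ι F (Sum.inr (Sum.inl i))

/-- The free generator corresponding to `c_i⁻¹`. -/
def btcinv (F : Type*) [Field F] (i : ZMod 4) : FreeAlgebra F BTGen :=
  FreeAlgebra.ι F (Sum.inr (Sum.inr i))

/-- The defining relations of the algebra `□̃_q`. -/
inductive BoxTRel (F : Type*) [Field F] (q : F) :
    FreeAlgebra F BTGen → FreeAlgebra F BTGen → Prop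
  | c_cinv (i : ZMod 4) : BoxTRel F q (btc F i * btcinv F i) 1
  | cinv_c (i : ZMod 4) : BoxTRel F q (btcinv F i * btc F i) 1
  | central_c (i : ZMod 4) (a : FreeAlgebra F BTGen) : BoxTRel F q (btc F i * a) (a * btc F i)
  | central_cinv (i : ZMod 4) (a : FreeAlgebra F BTGen) :
      BoxTRel F q (btcinv F i * a) (a * btcinv F i)
  | weyl (i : ZMod 4) : BoxTRel F q
      ((q - q⁻¹)⁻¹ • (q • (btx F i * btx F (i + 1)) - q⁻¹ • (btx F (i + 1) * btx F i)))
      (btc F i)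

/-- The algebra `□̃_q`. -/
abbrev BoxT (F : Type*) [Field F] (q : F) := RingQuot (BoxTRel F q)

/-- The generators `x_i` of `□̃_q`. -/
def xT (F : Type*) [Field F] (q : F) (i : ZMod 4) : BoxT F q :=
  RingQuot.mkAlgHom F (BoxTRel F q) (btx F i)

/-- The central generators `c_i` of `□̃_q`. -/
def cT (F : Type*) [Field F] (q : F) (i : ZMod 4) : BoxT F q :=
  RingQuot.mkAlgHom F (BoxTRel F q) (btc F i)

/-- The central generators `c_i⁻¹` of `□̃_q`. -/
def cinvT (F : Type*) [Field F] (q : F) (i : ZMod 4) : BoxT F q :=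
  RingQuot.mkAlgHom F (BoxTRel F q) (btcinv F i)

open TensorProduct in
/-- The trilinear multiplication map `M ⊗ N ⊗ P → A`, `u ⊗ v ⊗ c ↦ uvc`. -/
def mulMap3 {F : Type*} [Field F] {A : Type*} [Ring A] [Algebra F A]
    (M N P : Submodule F A) : (M ⊗[F] N) ⊗[F] P →ₗ[F] A :=
  TensorProduct.lift
    (LinearMap.mk₂ F (fun t c => Submodule.mulMap M N t * (c : A))
      (fun t t' c => by simp only [map_add, add_mul])
      (fun s t c => by simp only [map_smul, smul_mul_assoc])
      (fun t c c' => by simp only [Submodule.coe_add, mul_add])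
      (fun s t c => by simp only [SetLike.val_smul, mul_smul_comm]))

open scoped TensorProduct

section Model

/-! ### Twisted operators on a tensor product of free algebras -/

variable {R : Type*} [CommRing R] (s d : Bool → Bool → R)

/-- Left multiplication by an odd letter `y_j` satisfies `y_j w = σ_j(w) y_j + δ_j(w)` with `σ_j` the
endomorphism `x_k ↦ s j k • x_k` and `δ_j` the `σ_j`-derivation with `δ_j(x_k) = d j k`. The two are
encoded together as the algebra homomorphism `w ↦ !![σ_j w, δ_j w; 0, w]`. -/
def twist (j : Bool) :
    FreeAlgebra R Bool →ₐ[R] Matrix (Fin 2) (Fin 2) (FreeAlgebra R Bool) :=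
  FreeAlgebra.lift R fun k =>
    !![s j k • FreeAlgebra.ι R k, algebraMap R _ (d j k); 0, FreeAlgebra.ι R k]

theorem twist_bot (j : Bool) (w : FreeAlgebra R Bool) :
    twist s d j w 1 0 = 0 ∧ twist s d j w 1 1 = w := by
  induction w using FreeAlgebra.induction with
  | grade0 r => simp [Matrix.algebraMap_matrix_apply]
  | grade1 k => simp [twist]
  | mul a b ha hb => simp [Matrix.mul_apply, Fin.sum_univ_two, ha, hb]
  | add a b ha hb => simp [ha, hb]

theorem twist_ι_mul (j k : Bool) (w : FreeAlgebra R Bool) :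
    twist s d j (FreeAlgebra.ι R k * w) 0 0
        = s j k • (FreeAlgebra.ι R k * twist s d j w 0 0) ∧
      twist s d j (FreeAlgebra.ι R k * w) 0 1
        = s j k • (FreeAlgebra.ι R k * twist s d j w 0 1) + d j k • w := by
  have h := twist_bot s d j w
  have hk : twist s d j (FreeAlgebra.ι R k) =
      !![s j k • FreeAlgebra.ι R k, algebraMap R _ (d j k); 0, FreeAlgebra.ι R k] :=
    FreeAlgebra.lift_ι_apply _ _
  rw [map_mul, hk, Matrix.mul_apply, Matrix.mul_apply]
  simp [Fin.sum_univ_two, h, Algebra.smul_def, mul_assoc]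

/-- The tensor product of two free algebras on two letters; the first factor stands for the even
part and the second for the odd part. -/
abbrev Model (R : Type*) [CommRing R] := FreeAlgebra R Bool ⊗[R] FreeAlgebra R Bool

/-- Left multiplication by an even letter. -/
def evenOp (k : Bool) : Module.End R (Model R) :=
  TensorProduct.map (LinearMap.mulLeft R (FreeAlgebra.ι R k)) LinearMap.id

/-- The entries of the top row of `twist`: `σ_j` for `i = 0` and `δ_j` for `i = 1`. -/
def twistEntry (j : Bool) (i : Fin 2) : FreeAlgebra R Bool →ₗ[R] FreeAlgebra R Bool :=
  (Matrix.entryLinearMap R (FreeAlgebra R Bool) 0 i) ∘ₗ (twist s d j).toLinearMap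

/-- The action of an odd letter: `u ⊗ v ↦ σ_j(u) ⊗ y_j v + δ_j(u) ⊗ v`. -/
def oddOp (j : Bool) : Module.End R (Model R) :=
  TensorProduct.map (twistEntry s d j 0) (LinearMap.mulLeft R (FreeAlgebra.ι R j)) +
    TensorProduct.map (twistEntry s d j 1) LinearMap.id

theorem oddOp_mul_evenOp (j k : Bool) :
    oddOp s d j * evenOp k = s j k • (evenOp k * oddOp s d j) + d j k • 1 := by
  refine TensorProduct.ext' fun u v => ?_
  obtain ⟨h0, h1⟩ := twist_ι_mul s d j k u
  simp [oddOp, evenOp, twistEntry, h0, h1, TensorProduct.add_tmul, TensorProduct.smul_tmul',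
    add_assoc, -map_mul]

theorem oddOp_one_tmul (j : Bool) (v : FreeAlgebra R Bool) :
    oddOp s d j (1 ⊗ₜ v) = 1 ⊗ₜ (FreeAlgebra.ι R j * v) := by
  simp [oddOp, twistEntry]

end Model

section Rep

/-! ### The representation -/

variable (F : Type*) [Field F] (q : F)

/-- The Laurent polynomial algebra in four variables. -/
abbrev Lau := AddMonoidAlgebra F (ZMod 4 →₀ ℤ)

/-- The Laurent monomial `λ_i ^ n`. -/
def lam (i : ZMod 4) (n : ℤ) : Lau F := AddMonoidAlgebra.single (Finsupp.single i n) 1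

/-- The scalars in `x_{2j+1} x_{2k} = s x_{2k} x_{2j+1} + d`, where the letters `false`, `true`
encode `0`, `1`. The scalar is `q²` if `2j+1` follows `2k` in `ℤ/4ℤ`, and `q⁻²` if it precedes it. -/
def sco (j k : Bool) : Lau F := algebraMap F _ (if j = k then q ^ 2 else (q ^ 2)⁻¹)

/-- The correction terms in `x_{2j+1} x_{2k} = s x_{2k} x_{2j+1} + d`. -/
def dco : Bool → Bool → Lau F
  | false, false => -(q * (q - q⁻¹)) • lam F 0 1
  | false, true => (q⁻¹ * (q - q⁻¹)) • lam F 1 1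
  | true, true => -(q * (q - q⁻¹)) • lam F 2 1
  | true, false => (q⁻¹ * (q - q⁻¹)) • lam F 3 1

/-- The operator representing `x_{2k}`. -/
abbrev opX (k : Bool) : Module.End (Lau F) (Model (Lau F)) := evenOp k
/-- The operator representing `x_{2j+1}`. -/
abbrev opY (j : Bool) : Module.End (Lau F) (Model (Lau F)) := oddOp (sco F q) (dco F q) j

/-- The operator representing `x_i`. -/
def opx (i : ZMod 4) : Module.End (Lau F) (Model (Lau F)) :=
  (![opX F false, opY F q false, opX F true, opY F q true] : Fin 4 → _) i

/-- The images of the generators of `□̃_q` as operators on the model. -/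
def opGen : BTGen → Module.End (Lau F) (Model (Lau F))
  | .inl i => opx F q i
  | .inr (.inl i) => algebraMap (Lau F) _ (lam F i 1)
  | .inr (.inr i) => algebraMap (Lau F) _ (lam F i (-1))

/-- The defining relation for a pair `(x_i, x_{i+1})` with `i` even, solved for odd times even. -/
theorem weyl_even_iff {q : F} (hq : q ≠ 0) {B : Type*} [Ring B] [Algebra F B] (x y c : B) :
    q • (x * y) - q⁻¹ • (y * x) = (q - q⁻¹) • c ↔
      y * x = q ^ 2 • (x * y) + (-(q * (q - q⁻¹))) • c := by
  constructor
  · intro h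
    have h' : y * x = q • (q • (x * y) - (q • (x * y) - q⁻¹ • (y * x))) := by
      match_scalars <;> (field_simp; try ring)
    rw [h', h]
    module
  · intro h
    rw [h]
    match_scalars <;> (field_simp; try ring)

/-- The defining relation for a pair `(x_i, x_{i+1})` with `i` odd, solved for odd times even:
here `y` is `x_i` and `x` is `x_{i+1}`. -/
theorem weyl_odd_iff {q : F} (hq : q ≠ 0) {B : Type*} [Ring B] [Algebra F B] (x y c : B) :
    q • (y * x) - q⁻¹ • (x * y) = (q - q⁻¹) • c ↔
      y * x = (q ^ 2)⁻¹ • (x * y) + (q⁻¹ * (q - q⁻¹)) • c := by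
  constructor
  · intro h
    have h' : y * x = q⁻¹ • ((q • (y * x) - q⁻¹ • (x * y)) + q⁻¹ • (x * y)) := by
      match_scalars <;> (field_simp; try ring)
    rw [h', h]
    match_scalars <;> field_simp
  · intro h
    rw [h]
    match_scalars <;> (field_simp; try ring)

theorem sub_inv_ne_zero_of_sq_ne_one {q : F} (hq : q ≠ 0) (hq2 : q ^ 2 ≠ 1) : q - q⁻¹ ≠ 0 := by
  intro h
  apply hq2
  field_simp at h
  linear_combination h

theorem opx_weyl (hq : q ≠ 0) (hq2 : q ^ 2 ≠ 1) (i : ZMod 4) :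
    (q - q⁻¹)⁻¹ • (q • (opx F q i * opx F q (i + 1)) - q⁻¹ • (opx F q (i + 1) * opx F q i))
      = algebraMap (Lau F) _ (lam F i 1) := by
  rw [inv_smul_eq_iff₀ (sub_inv_ne_zero_of_sq_ne_one F hq hq2)]
  have key := oddOp_mul_evenOp (sco F q) (dco F q)
  change ZMod 4 at i
  fin_cases i
  · refine (weyl_even_iff F hq (opX F false) (opY F q false) _).2 ?_
    have h := key false false
    rw [sco, if_pos rfl, algebraMap_smul, dco, smul_assoc, ← Algebra.algebraMap_eq_smul_one] at h
    exact h
  · refine (weyl_odd_iff F hq (opX F true) (opY F q false) _).2 ?_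
    have h := key false true
    rw [sco, if_neg (by decide), algebraMap_smul, dco, smul_assoc,
      ← Algebra.algebraMap_eq_smul_one] at h
    exact h
  · refine (weyl_even_iff F hq (opX F true) (opY F q true) _).2 ?_
    have h := key true true
    rw [sco, if_pos rfl, algebraMap_smul, dco, smul_assoc, ← Algebra.algebraMap_eq_smul_one] at h
    exact h
  · refine (weyl_odd_iff F hq (opX F false) (opY F q true) _).2 ?_
    have h := key true false
    rw [sco, if_neg (by decide), algebraMap_smul, dco, smul_assoc,
      ← Algebra.algebraMap_eq_smul_one] at h
    exact h

theorem lam_mul_lam_neg (i : ZMod 4) : lam F i 1 * lam F i (-1) = 1 := by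
  simp [lam, AddMonoidAlgebra.single_mul_single, AddMonoidAlgebra.one_def]

variable {F q}

/-- The representation of `□̃_q` on the model over the Laurent polynomials; each `c_i` acts as the
scalar `λ_i`. -/
def rep (hq : q ≠ 0) (hq2 : q ^ 2 ≠ 1) :
    BoxT F q →ₐ[F] Module.End (Lau F) (Model (Lau F)) :=
  RingQuot.liftAlgHom F ⟨FreeAlgebra.lift F (opGen F q), by
    have hl := lam_mul_lam_neg F
    intro a b h
    induction h with
    | c_cinv i =>
      rw [map_mul, map_one, btc, btcinv, FreeAlgebra.lift_ι_apply, FreeAlgebra.lift_ι_apply]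
      simp only [opGen, ← map_mul, hl, map_one]
    | cinv_c i =>
      rw [map_mul, map_one, btc, btcinv, FreeAlgebra.lift_ι_apply, FreeAlgebra.lift_ι_apply]
      simp only [opGen, ← map_mul, mul_comm (lam F i (-1)), hl, map_one]
    | central_c i a =>
      simp only [map_mul, btc, FreeAlgebra.lift_ι_apply, opGen, Algebra.commutes]
    | central_cinv i a =>
      simp only [map_mul, btcinv, FreeAlgebra.lift_ι_apply, opGen, Algebra.commutes]
    | weyl i =>
      simp only [map_sub, map_smul, map_mul, btx, btc, FreeAlgebra.lift_ι_apply, opGen]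
      exact opx_weyl F q hq hq2 i⟩

theorem rep_xT (hq : q ≠ 0) (hq2 : q ^ 2 ≠ 1) (i : ZMod 4) :
    rep hq hq2 (xT F q i) = opx F q i := by
  simp [rep, xT, btx, opGen]

theorem rep_cT (hq : q ≠ 0) (hq2 : q ^ 2 ≠ 1) (i : ZMod 4) :
    rep hq hq2 (cT F q i) = algebraMap (Lau F) _ (lam F i 1) := by
  simp [rep, cT, btc, opGen]

theorem cT_mul_cinvT (i : ZMod 4) : cT F q i * cinvT F q i = 1 := by
  simpa [cT, cinvT] using RingQuot.mkAlgHom_rel F (BoxTRel.c_cinv (F := F) (q := q) i)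

theorem cinvT_mul_cT (i : ZMod 4) : cinvT F q i * cT F q i = 1 := by
  simpa [cT, cinvT] using RingQuot.mkAlgHom_rel F (BoxTRel.cinv_c (F := F) (q := q) i)

theorem cT_comm (i : ZMod 4) (a : BoxT F q) : cT F q i * a = a * cT F q i := by
  obtain ⟨a, rfl⟩ := RingQuot.mkAlgHom_surjective F (BoxTRel F q) a
  simpa [cT] using RingQuot.mkAlgHom_rel F (BoxTRel.central_c (F := F) (q := q) i a)

theorem cinvT_comm (i : ZMod 4) (a : BoxT F q) : cinvT F q i * a = a * cinvT F q i := by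
  obtain ⟨a, rfl⟩ := RingQuot.mkAlgHom_surjective F (BoxTRel F q) a
  simpa [cinvT] using RingQuot.mkAlgHom_rel F (BoxTRel.central_cinv (F := F) (q := q) i a)

theorem xT_weyl (hq : q ≠ 0) (hq2 : q ^ 2 ≠ 1) (i : ZMod 4) :
    q • (xT F q i * xT F q (i + 1)) - q⁻¹ • (xT F q (i + 1) * xT F q i)
      = (q - q⁻¹) • cT F q i := by
  rw [← inv_smul_eq_iff₀ (sub_inv_ne_zero_of_sq_ne_one F hq hq2)]
  simpa [cT, xT] using RingQuot.mkAlgHom_rel F (BoxTRel.weyl (F := F) (q := q) i)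

variable (F q) in
/-- The subalgebra generated by the `c_i` and their inverses. -/
abbrev CSub : Subalgebra F (BoxT F q) :=
  Algebra.adjoin F (Set.range (cT F q) ∪ Set.range (cinvT F q))

theorem CSub_comm {c : BoxT F q} (hc : c ∈ CSub F q) (a : BoxT F q) : c * a = a * c := by
  induction hc using Algebra.adjoin_induction with
  | mem x hx =>
    rcases hx with ⟨i, rfl⟩ | ⟨i, rfl⟩
    · exact cT_comm i a
    · exact cinvT_comm i a
  | algebraMap r => exact Algebra.commutes r a
  | add x y _ _ hx hy => rw [add_mul, mul_add, hx, hy]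
  | mul x y _ _ hx hy => rw [mul_assoc, hy, ← mul_assoc, hx, mul_assoc]

/-- Four units of a commutative algebra define a homomorphism from the Laurent polynomials. -/
theorem exists_lauHom {B : Type*} [CommRing B] [Algebra F B] (u : ZMod 4 → Bˣ) :
    ∃ φ : Lau F →ₐ[F] B, ∀ i, φ (lam F i 1) = u i ∧ φ (lam F i (-1)) = ↑(u i)⁻¹ := by
  let h : (ZMod 4 →₀ ℤ) →+ Additive Bˣ :=
    Finsupp.liftAddHom fun i => zmultiplesHom _ (Additive.ofMul (u i))
  refine ⟨AddMonoidAlgebra.lift F B _ ((Units.coeHom B).comp (AddMonoidHom.toMultiplicativeLeft h)),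
    fun i => ⟨?_, ?_⟩⟩ <;>
  simp [lam, h, AddMonoidAlgebra.lift_single, -Finsupp.single_neg]

variable (F q) in
theorem exists_CSub_hom : ∃ φ : Lau F →ₐ[F] CSub F q,
    ∀ i, (φ (lam F i 1) : BoxT F q) = cT F q i ∧ (φ (lam F i (-1)) : BoxT F q) = cinvT F q i := by
  let _ : CommRing (CSub F q) :=
    { (inferInstance : Ring (CSub F q)) with
      mul_comm := fun a b => Subtype.ext (CSub_comm a.2 b) }
  let u : ZMod 4 → (CSub F q)ˣ := fun i =>
    ⟨⟨cT F q i, Algebra.subset_adjoin (.inl ⟨i, rfl⟩)⟩,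
      ⟨cinvT F q i, Algebra.subset_adjoin (.inr ⟨i, rfl⟩)⟩,
      Subtype.ext (cT_mul_cinvT i), Subtype.ext (cinvT_mul_cT i)⟩
  obtain ⟨φ, hφ⟩ := exists_lauHom (F := F) (B := CSub F q) u
  exact ⟨φ, fun i => ⟨by rw [(hφ i).1], by rw [(hφ i).2]; rfl⟩⟩

theorem CSub_hom_surjective {φ : Lau F →ₐ[F] CSub F q}
    (hφ : ∀ i, (φ (lam F i 1) : BoxT F q) = cT F q i ∧
      (φ (lam F i (-1)) : BoxT F q) = cinvT F q i) : Function.Surjective φ := by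
  have h : CSub F q ≤ ((CSub F q).val.comp φ).range := by
    refine Algebra.adjoin_le ?_
    rintro _ (⟨i, rfl⟩ | ⟨i, rfl⟩)
    · exact ⟨_, (hφ i).1⟩
    · exact ⟨_, (hφ i).2⟩
  rintro ⟨c, hc⟩
  obtain ⟨l, hl⟩ := h hc
  exact ⟨l, Subtype.ext hl⟩

/-- The image of a Laurent polynomial acts on the model as the corresponding scalar. -/
theorem rep_CSub_hom (hq : q ≠ 0) (hq2 : q ^ 2 ≠ 1) {φ : Lau F →ₐ[F] CSub F q}
    (hφ : ∀ i, (φ (lam F i 1) : BoxT F q) = cT F q i) (l : Lau F) :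
    rep hq hq2 (φ l) = algebraMap (Lau F) _ l := by
  have h : ((rep hq hq2).comp ((CSub F q).val.comp φ)) =
      (Algebra.algHom F (Lau F) (Module.End (Lau F) (Model (Lau F)))) := by
    refine AddMonoidAlgebra.algHom_ext' ?_ (by ext)
    refine Finsupp.mulHom_ext' fun i => MonoidHom.ext_mint ?_
    have h1 := (congrArg (rep hq hq2) (hφ i)).trans (rep_cT hq hq2 i)
    exact h1
  exact DFunLike.congr_fun h l

/-! ### Action on the cyclic vector and injectivity -/

variable (F q) in
/-- The homomorphism from the free algebra on two letters sending `false` to `x_a` and `true`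
to `x_b`. -/
def xPair (a b : ZMod 4) : FreeAlgebra F Bool →ₐ[F] BoxT F q :=
  FreeAlgebra.lift F fun k => xT F q (cond k b a)

theorem xPair_range (a b : ZMod 4) :
    (xPair F q a b).range = Algebra.adjoin F {xT F q a, xT F q b} := by
  rw [xPair, ← Algebra.adjoin_range_eq_range_freeAlgebra_lift]
  congr 1
  ext y
  simp

variable (F) in
/-- Extension of scalars from `F` to the Laurent polynomials on free algebras, fixing the letters. -/
def scal : FreeAlgebra F Bool →ₐ[F] FreeAlgebra (Lau F) Bool :=
  FreeAlgebra.lift F (FreeAlgebra.ι (Lau F))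

theorem basisFreeMonoid_apply {R : Type*} [CommRing R] (w : FreeMonoid Bool) :
    FreeAlgebra.basisFreeMonoid R Bool w = FreeMonoid.lift (FreeAlgebra.ι R) w := by
  simp [FreeAlgebra.basisFreeMonoid, FreeAlgebra.equivMonoidAlgebraFreeMonoid]

/-- Extension of scalars sends words to words. -/
theorem scal_basis (w : FreeMonoid Bool) :
    scal F (FreeAlgebra.basisFreeMonoid F Bool w) =
      FreeAlgebra.basisFreeMonoid (Lau F) Bool w := by
  rw [basisFreeMonoid_apply, basisFreeMonoid_apply]
  have h : (scal F : FreeAlgebra F Bool →* _).comp (FreeMonoid.lift (FreeAlgebra.ι F)) =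
      FreeMonoid.lift (FreeAlgebra.ι (Lau F)) := by
    ext k
    simp [scal]
  exact DFunLike.congr_fun h w

/-- The even subalgebra acts on the model by left multiplication on the first factor. -/
theorem rep_even (hq : q ≠ 0) (hq2 : q ^ 2 ≠ 1) (u : FreeAlgebra F Bool)
    (t v : FreeAlgebra (Lau F) Bool) :
    rep hq hq2 (xPair F q 0 2 u) (t ⊗ₜ v) = (scal F u * t) ⊗ₜ v := by
  induction u using FreeAlgebra.induction generalizing t with
  | grade0 r =>
    rw [AlgHom.commutes, AlgHom.commutes, AlgHom.commutes, Module.algebraMap_end_apply,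
      TensorProduct.smul_tmul', Algebra.smul_def]
  | grade1 k =>
    rw [xPair, FreeAlgebra.lift_ι_apply, rep_xT, scal, FreeAlgebra.lift_ι_apply]
    cases k <;> rfl
  | mul a b ha hb => rw [map_mul, map_mul, Module.End.mul_apply, hb, ha, map_mul, mul_assoc]
  | add a b ha hb =>
    rw [map_add, map_add, LinearMap.add_apply, ha, hb, map_add, add_mul, TensorProduct.add_tmul]

/-- The odd subalgebra acts on the vectors `1 ⊗ t` by left multiplication on the second factor.
This fails on `s ⊗ t` for general `s`. -/
theorem rep_odd (hq : q ≠ 0) (hq2 : q ^ 2 ≠ 1) (v : FreeAlgebra F Bool)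
    (t : FreeAlgebra (Lau F) Bool) :
    rep hq hq2 (xPair F q 1 3 v) (1 ⊗ₜ t) = 1 ⊗ₜ (scal F v * t) := by
  induction v using FreeAlgebra.induction generalizing t with
  | grade0 r =>
    rw [AlgHom.commutes, AlgHom.commutes, AlgHom.commutes, Module.algebraMap_end_apply,
      ← Algebra.smul_def, TensorProduct.tmul_smul]
  | grade1 k =>
    rw [xPair, FreeAlgebra.lift_ι_apply, rep_xT, scal, FreeAlgebra.lift_ι_apply]
    cases k
    · exact oddOp_one_tmul _ _ false t
    · exact oddOp_one_tmul _ _ true t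
  | mul a b ha hb => rw [map_mul, map_mul, Module.End.mul_apply, hb, ha, map_mul, mul_assoc]
  | add a b ha hb =>
    rw [map_add, map_add, LinearMap.add_apply, ha, hb, map_add, add_mul, TensorProduct.tmul_add]

/-- Applying `u v c` to the cyclic vector `1 ⊗ 1` recovers `u`, `v` and `c`. -/
theorem rep_triple (hq : q ≠ 0) (hq2 : q ^ 2 ≠ 1) {φ : Lau F →ₐ[F] CSub F q}
    (hφ : ∀ i, (φ (lam F i 1) : BoxT F q) = cT F q i) (u v : FreeAlgebra F Bool) (l : Lau F) :
    rep hq hq2 (xPair F q 0 2 u * xPair F q 1 3 v * φ l) (1 ⊗ₜ 1) =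
      l • (scal F u ⊗ₜ[Lau F] scal F v) := by
  rw [map_mul, map_mul, rep_CSub_hom hq hq2 hφ, ← Algebra.commutes, Module.End.mul_apply,
    Module.algebraMap_end_apply, Module.End.mul_apply, rep_odd, rep_even, mul_one, mul_one]

variable (F) in
/-- The `F`-basis of `(FreeAlgebra ⊗ FreeAlgebra) ⊗ L` formed by pairs of words and Laurent
monomials. -/
def tripleBasis : Module.Basis ((FreeMonoid Bool × FreeMonoid Bool) × (ZMod 4 →₀ ℤ)) F
    ((FreeAlgebra F Bool ⊗[F] FreeAlgebra F Bool) ⊗[F] Lau F) :=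
  ((FreeAlgebra.basisFreeMonoid F Bool).tensorProduct
    (FreeAlgebra.basisFreeMonoid F Bool)).tensorProduct (AddMonoidAlgebra.basis (ZMod 4 →₀ ℤ) F)

variable (F) in
/-- The `F`-basis of the model formed by Laurent monomials times pairs of words. -/
def modelBasis : Module.Basis ((ZMod 4 →₀ ℤ) × (FreeMonoid Bool × FreeMonoid Bool)) F
    (Model (Lau F)) :=
  (AddMonoidAlgebra.basis (ZMod 4 →₀ ℤ) F).smulTower
    ((FreeAlgebra.basisFreeMonoid (Lau F) Bool).tensorProduct
      (FreeAlgebra.basisFreeMonoid (Lau F) Bool))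

/-- A linear map given by the formula of `rep_triple` carries `tripleBasis` bijectively onto
`modelBasis`. -/
theorem injective_of_triple
    (Ψ : (FreeAlgebra F Bool ⊗[F] FreeAlgebra F Bool) ⊗[F] Lau F →ₗ[F] Model (Lau F))
    (hΨ : ∀ u v l, Ψ ((u ⊗ₜ v) ⊗ₜ l) = l • (scal F u ⊗ₜ[Lau F] scal F v)) :
    Function.Injective Ψ := by
  have h : Ψ = ((tripleBasis F).equiv (modelBasis F) (Equiv.prodComm _ _)).toLinearMap := by
    refine (tripleBasis F).ext fun i => ?_
    obtain ⟨⟨w, w'⟩, m⟩ := i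
    rw [LinearEquiv.coe_coe, Module.Basis.equiv_apply, Equiv.prodComm_apply, Prod.swap,
      modelBasis, Module.Basis.smulTower_apply, Module.Basis.tensorProduct_apply,
      tripleBasis, Module.Basis.tensorProduct_apply, Module.Basis.tensorProduct_apply, hΨ,
      scal_basis, scal_basis]
  rw [h]
  exact LinearEquiv.injective _

theorem xPair_mem (a b : ZMod 4) (u : FreeAlgebra F Bool) :
    xPair F q a b u ∈ Algebra.adjoin F {xT F q a, xT F q b} :=
  xPair_range (F := F) (q := q) a b ▸ ⟨u, rfl⟩

variable (F q) in
/-- The subalgebra generated by `x₀` and `x₂`. -/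
abbrev EvenSub := Algebra.adjoin F {xT F q 0, xT F q 2}
variable (F q) in
/-- The subalgebra generated by `x₁` and `x₃`. -/
abbrev OddSub := Algebra.adjoin F {xT F q 1, xT F q 3}

theorem mulMap3_injective (hq : q ≠ 0) (hq2 : q ^ 2 ≠ 1) :
    Function.Injective (mulMap3 (Subalgebra.toSubmodule (EvenSub F q))
      (Subalgebra.toSubmodule (OddSub F q)) (Subalgebra.toSubmodule (CSub F q))) := by
  obtain ⟨φ, hφ⟩ := exists_CSub_hom F q
  -- Pull back along the surjections from the free algebras and the Laurent polynomials.
  let e : FreeAlgebra F Bool →ₗ[F] Subalgebra.toSubmodule (EvenSub F q) :=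
    (xPair F q 0 2).toLinearMap.codRestrict _ (xPair_mem 0 2)
  let o : FreeAlgebra F Bool →ₗ[F] Subalgebra.toSubmodule (OddSub F q) :=
    (xPair F q 1 3).toLinearMap.codRestrict _ (xPair_mem 1 3)
  let c : Lau F →ₗ[F] Subalgebra.toSubmodule (CSub F q) := φ.toLinearMap
  have he : Function.Surjective e := fun y => by
    obtain ⟨u, hu⟩ := (xPair_range (F := F) (q := q) 0 2).ge y.2
    exact ⟨u, Subtype.ext hu⟩
  have ho : Function.Surjective o := fun y => by
    obtain ⟨u, hu⟩ := (xPair_range (F := F) (q := q) 1 3).ge y.2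
    exact ⟨u, Subtype.ext hu⟩
  have hc : Function.Surjective c := CSub_hom_surjective hφ
  have hg := TensorProduct.map_surjective (TensorProduct.map_surjective he ho) hc
  let ev : BoxT F q →ₗ[F] Model (Lau F) :=
    { toFun := fun a => rep hq hq2 a (1 ⊗ₜ 1)
      map_add' := fun a b => by rw [map_add, LinearMap.add_apply]
      map_smul' := fun r a => by rw [map_smul, LinearMap.smul_apply, RingHom.id_apply] }
  have hΨ := injective_of_triple
    (ev ∘ₗ mulMap3 _ _ _ ∘ₗ TensorProduct.map (TensorProduct.map e o) c)
    fun u v l => rep_triple hq hq2 (fun i => (hφ i).1) u v l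
  intro a b hab
  obtain ⟨a, rfl⟩ := hg a
  obtain ⟨b, rfl⟩ := hg b
  exact congrArg _ (hΨ (congrArg ev hab))

theorem CSub_hom_injective (hq : q ≠ 0) (hq2 : q ^ 2 ≠ 1) {φ : Lau F →ₐ[F] CSub F q}
    (hφ : ∀ i, (φ (lam F i 1) : BoxT F q) = cT F q i) : Function.Injective φ := by
  intro a b hab
  have h := congrArg (fun c : CSub F q => rep hq hq2 (c : BoxT F q)) hab
  simp only [rep_CSub_hom hq hq2 hφ] at h
  refine FreeAlgebra.algebraMap_leftInverse (R := Lau F) (X := Bool) |>.injective ?_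
  have h1 := DFunLike.congr_fun h ((1 : FreeAlgebra (Lau F) Bool) ⊗ₜ[Lau F] (1 : FreeAlgebra (Lau F) Bool))
  have h2 := congrArg (LinearMap.mul' (Lau F) (FreeAlgebra (Lau F) Bool)) h1
  simpa [Algebra.algebraMap_eq_smul_one] using h2

/-! ### Spanning -/

variable (F q) in
/-- The span of the products `u v c` with `u` even, `v` odd and `c` in the subalgebra of the
central generators. -/
def triSpan : Submodule F (BoxT F q) :=
  Subalgebra.toSubmodule (EvenSub F q) * Subalgebra.toSubmodule (OddSub F q) *
    Subalgebra.toSubmodule (CSub F q)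

/-- The span is stable under right multiplication by odd elements and by central coefficients: the
coefficient of a product `u v c` commutes with any further odd factor. -/
theorem triSpan_mul_mem {a n c : BoxT F q} (ha : a ∈ triSpan F q) (hn : n ∈ OddSub F q)
    (hc : c ∈ CSub F q) : a * (n * c) ∈ triSpan F q := by
  induction ha using Submodule.mul_induction_on' with
  | mem_mul_mem b hb c' hc' =>
    have : b * c' * (n * c) = (b * n) * (c' * c) := by
      rw [mul_assoc, ← mul_assoc c', CSub_comm hc', mul_assoc, mul_assoc]
    rw [this]
    clear this
    refine Submodule.mul_mem_mul ?_ (Subalgebra.mul_mem (CSub F q) hc' hc)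
    induction hb using Submodule.mul_induction_on' with
    | mem_mul_mem m hm n' hn' =>
      rw [mul_assoc]
      exact Submodule.mul_mem_mul hm (Subalgebra.mul_mem (OddSub F q) hn' hn)
    | add x _ y _ hx hy => rw [add_mul]; exact add_mem hx hy
  | add x _ y _ hx hy => rw [add_mul]; exact add_mem hx hy

theorem even_mul_triSpan {m a : BoxT F q} (hm : m ∈ EvenSub F q) (ha : a ∈ triSpan F q) :
    m * a ∈ triSpan F q := by
  rw [triSpan, mul_assoc] at ha ⊢
  induction ha using Submodule.mul_induction_on' with
  | mem_mul_mem m' hm' b hb =>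
    rw [← mul_assoc m]
    exact Submodule.mul_mem_mul (Subalgebra.mul_mem (EvenSub F q) hm hm') hb
  | add x _ y _ hx hy => rw [mul_add]; exact add_mem hx hy

theorem c_mul_triSpan {c a : BoxT F q} (hc : c ∈ CSub F q) (ha : a ∈ triSpan F q) :
    c * a ∈ triSpan F q := by
  have := triSpan_mul_mem ha (one_mem (OddSub F q)) hc
  rwa [one_mul, ← CSub_comm hc] at this

theorem cT_mem (i : ZMod 4) : cT F q i ∈ CSub F q := Algebra.subset_adjoin (.inl ⟨i, rfl⟩)

theorem mul_mem_triSpan {m n c : BoxT F q} (hm : m ∈ EvenSub F q) (hn : n ∈ OddSub F q)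
    (hc : c ∈ CSub F q) : m * n * c ∈ triSpan F q :=
  Submodule.mul_mem_mul (Submodule.mul_mem_mul hm hn) hc

/-- Each odd generator is adjacent to each even one in `ℤ/4ℤ`, so each such product can be
reordered up to a central correction. -/
theorem odd_even_swap (hq : q ≠ 0) (hq2 : q ^ 2 ≠ 1) {y x : BoxT F q}
    (hy : y ∈ ({xT F q 1, xT F q 3} : Set (BoxT F q)))
    (hx : x ∈ ({xT F q 0, xT F q 2} : Set (BoxT F q))) :
    ∃ (s : F) (c : BoxT F q), c ∈ CSub F q ∧ y * x = s • (x * y) + c := by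
  rcases hy with rfl | rfl <;> rcases hx with rfl | rfl
  · exact ⟨_, _, Subalgebra.smul_mem _ (cT_mem 0) _,
      (weyl_even_iff F hq _ _ _).1 (xT_weyl hq hq2 0)⟩
  · exact ⟨_, _, Subalgebra.smul_mem _ (cT_mem 1) _,
      (weyl_odd_iff F hq _ _ _).1 (xT_weyl hq hq2 1)⟩
  · exact ⟨_, _, Subalgebra.smul_mem _ (cT_mem 3) _,
      (weyl_odd_iff F hq _ _ _).1 (xT_weyl hq hq2 3)⟩
  · exact ⟨_, _, Subalgebra.smul_mem _ (cT_mem 2) _,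
      (weyl_even_iff F hq _ _ _).1 (xT_weyl hq hq2 2)⟩

/-- An odd generator can be moved to the right past an even element. -/
theorem odd_mul_even_mem (hq : q ≠ 0) (hq2 : q ^ 2 ≠ 1) {y u : BoxT F q}
    (hy : y ∈ ({xT F q 1, xT F q 3} : Set (BoxT F q))) (hu : u ∈ EvenSub F q) :
    y * u ∈ triSpan F q := by
  -- Quantifying over the right factor `m` makes the claim stable under products in `u`, so that
  -- induction on `u` reduces it to the case of a generator.
  suffices H : ∀ m ∈ EvenSub F q, y * m ∈ triSpan F q → y * (u * m) ∈ triSpan F q by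
    have h1 := H 1 (one_mem _) (by
      simpa using mul_mem_triSpan (one_mem _) (Algebra.subset_adjoin hy) (one_mem (CSub F q)))
    rwa [mul_one] at h1
  induction hu using Algebra.adjoin_induction with
  | mem x hx =>
    intro m hm h
    obtain ⟨s, c, hc, e⟩ := odd_even_swap hq hq2 hy hx
    rw [← mul_assoc, e, add_mul, smul_mul_assoc, mul_assoc]
    refine add_mem (Submodule.smul_mem _ _ (even_mul_triSpan (Algebra.subset_adjoin hx) h)) ?_
    rw [CSub_comm hc]
    simpa using mul_mem_triSpan hm (one_mem _) hc
  | algebraMap r =>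
    intro m _ h
    rw [← Algebra.smul_def, mul_smul_comm]
    exact Submodule.smul_mem _ _ h
  | add a b _ _ ha hb =>
    intro m hm h
    rw [add_mul, mul_add]
    exact add_mem (ha m hm h) (hb m hm h)
  | mul a b _ hb' ha hb =>
    intro m hm h
    rw [mul_assoc]
    exact ha _ (mul_mem hb' hm) (hb m hm h)

theorem odd_mul_triSpan (hq : q ≠ 0) (hq2 : q ^ 2 ≠ 1) {y a : BoxT F q}
    (hy : y ∈ ({xT F q 1, xT F q 3} : Set (BoxT F q))) (ha : a ∈ triSpan F q) :
    y * a ∈ triSpan F q := by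
  rw [triSpan] at ha
  induction ha using Submodule.mul_induction_on' with
  | mem_mul_mem b hb c hc =>
    induction hb using Submodule.mul_induction_on' with
    | mem_mul_mem m hm n hn =>
      have := triSpan_mul_mem (odd_mul_even_mem hq hq2 hy hm) hn hc
      simpa only [mul_assoc] using this
    | add x _ z _ hx hz => rw [add_mul, mul_add]; exact add_mem hx hz
  | add x _ z _ hx hz => rw [mul_add]; exact add_mem hx hz

/-- The span contains `1` and is stable under left multiplication by every generator. -/
theorem triSpan_eq_top (hq : q ≠ 0) (hq2 : q ^ 2 ≠ 1) : triSpan F q = ⊤ := by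
  have h1 : (1 : BoxT F q) ∈ triSpan F q := by
    simpa using mul_mem_triSpan (one_mem (EvenSub F q)) (one_mem (OddSub F q)) (one_mem (CSub F q))
  suffices H : ∀ w : FreeAlgebra F BTGen, ∀ a ∈ triSpan F q,
      RingQuot.mkAlgHom F (BoxTRel F q) w * a ∈ triSpan F q by
    refine eq_top_iff.2 fun b _ => ?_
    obtain ⟨w, rfl⟩ := RingQuot.mkAlgHom_surjective F (BoxTRel F q) b
    simpa using H w 1 h1
  intro w
  induction w using FreeAlgebra.induction with
  | grade0 r =>
    intro a ha
    rw [AlgHom.commutes, ← Algebra.smul_def]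
    exact Submodule.smul_mem _ _ ha
  | grade1 g =>
    intro a ha
    rcases g with i | i | i
    · change xT F q i * a ∈ _
      change ZMod 4 at i
      fin_cases i
      · exact even_mul_triSpan (Algebra.subset_adjoin (.inl rfl)) ha
      · exact odd_mul_triSpan hq hq2 (.inl rfl) ha
      · exact even_mul_triSpan (Algebra.subset_adjoin (.inr rfl)) ha
      · exact odd_mul_triSpan hq hq2 (.inr rfl) ha
    · exact c_mul_triSpan (cT_mem i) ha
    · exact c_mul_triSpan (c := cinvT F q i) (Algebra.subset_adjoin (.inr ⟨i, rfl⟩)) ha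
  | mul u v hu hv =>
    intro a ha
    rw [map_mul, mul_assoc]
    exact hu _ (hv _ ha)
  | add u v hu hv =>
    intro a ha
    rw [map_add, add_mul]
    exact add_mem (hu _ ha) (hv _ ha)

theorem mulMap3_surjective (hq : q ≠ 0) (hq2 : q ^ 2 ≠ 1) :
    Function.Surjective (mulMap3 (Subalgebra.toSubmodule (EvenSub F q))
      (Subalgebra.toSubmodule (OddSub F q)) (Subalgebra.toSubmodule (CSub F q))) := by
  rw [← LinearMap.range_eq_top, ← top_le_iff, ← triSpan_eq_top hq hq2, triSpan, Submodule.mul_le]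
  intro b hb c hc
  rw [← Submodule.mulMap_range] at hb
  obtain ⟨t, rfl⟩ := hb
  exact ⟨t ⊗ₜ ⟨c, hc⟩, rfl⟩

end Rep

/-- Proposition 6.15(iii),(iv) for `□̃_q`: the subalgebra `C̃` is isomorphic to the Laurent
polynomial algebra in four variables, and the multiplication map
`□̃_q^even ⊗ □̃_q^odd ⊗ C̃ → □̃_q` is a linear isomorphism. -/
theorem stmt7 (F : Type*) [Field F] (q : F) (hq : q ≠ 0) (hq2 : q ^ 2 ≠ 1) :
    (∃ e : AddMonoidAlgebra F (ZMod 4 →₀ ℤ) ≃ₐ[F]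
        (Algebra.adjoin F (Set.range (cT F q) ∪ Set.range (cinvT F q)) :
          Subalgebra F (BoxT F q)),
      ∀ i : ZMod 4,
        (e (AddMonoidAlgebra.single (Finsupp.single i 1) 1) : BoxT F q) = cT F q i ∧
        (e (AddMonoidAlgebra.single (Finsupp.single i (-1)) 1) : BoxT F q) = cinvT F q i) ∧
    Function.Bijective
      (mulMap3
        (Subalgebra.toSubmodule (Algebra.adjoin F {xT F q 0, xT F q 2}))
        (Subalgebra.toSubmodule (Algebra.adjoin F {xT F q 1, xT F q 3}))
        (Subalgebra.toSubmodule
          (Algebra.adjoin F (Set.range (cT F q) ∪ Set.range (cinvT F q))))) := by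
  obtain ⟨φ, hφ⟩ := exists_CSub_hom F q
  exact ⟨⟨AlgEquiv.ofBijective φ ⟨CSub_hom_injective hq hq2 fun i => (hφ i).1,
    CSub_hom_surjective hφ⟩, hφ⟩, mulMap3_injective hq hq2, mulMap3_surjective hq hq2⟩
end
end

section
/- Let Ĉ denote the subalgebra of □̂_q generated by the c_i^{±1} (i ∈ ℤ/4ℤ), and let α₀, α₁, α₂, α₃ be invertible elements of Ĉ. In □̂_q define A = α₀ x₀ + α₁ x₁ and B = α₂ x₂ + α₃ x₃. Then A³B − [3]_q A²BA + [3]_q ABA² − BA³ = (q² − q⁻²)² α₀ α₁ c₀ (BA − AB) and B³A − [3]_q B²AB + [3]_q BAB² − AB³ = (q² − q⁻²)² α₂ α₃ c₂ (AB − BA). -/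
/-!
The `q`-Serre expression `qSerre q u v` is linear in `v`, so it is enough to treat separately the
two summands of the second argument. Put `X = α xᵢ`, `Y = β xᵢ₊₁`, `Z = γ xᵢ₊₂`, `W = δ xᵢ₊₃`, where
the coefficients are central, so that consecutive elements satisfy a `q`-Weyl relation with a
central right-hand side, while `(X, Z)` and `(Y, W)` satisfy the `q`-Serre relation.

In `qSerre q (X + Y) Z` every monomial can be normally ordered by moving `Y` to the left, since
`Y` is `q`-Weyl related both to `X` and to `Z`. The leading terms cancel, except for those of
`qSerre q X Z = 0`, the terms involving the constant of the `q`-Weyl relation of `Y` and `Z` cancel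
as well, and what the `q`-Weyl relation of `X` and `Y` leaves behind is the right-hand side
(`qSerre_add_left_weyl_right`). For `W` one moves `X` to the right instead
(`qSerre_add_right_weyl_left`). Adding the two gives the identity for `i` (`dolanGrady_BoxH`); the indices `i = 0` and `i = 2` are the two claims.
-/

noncomputable section

/-- Generator indices for `□̂_q`: `Sum.inl i` is `x_i`, `Sum.inr (Sum.inl i)` is `c_i`,
and `Sum.inr (Sum.inr i)` is `c_i⁻¹`. -/
abbrev BHGen := (ZMod 4) ⊕ ((ZMod 4) ⊕ (ZMod 4))

/-- The free generator corresponding to `x_i`. -/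
def bhx (F : Type*) [Field F] (i : ZMod 4) : FreeAlgebra F BHGen :=
  FreeAlgebra.ι F (Sum.inl i)

/-- The free generator corresponding to `c_i`. -/
def bhc (F : Type*) [Field F] (i : ZMod 4) : FreeAlgebra F BHGen :=
  FreeAlgebra.ι F (Sum.inr (Sum.inl i))

/-- The free generator corresponding to `c_i⁻¹`. -/
def bhcinv (F : Type*) [Field F] (i : ZMod 4) : FreeAlgebra F BHGen :=
  FreeAlgebra.ι F (Sum.inr (Sum.inr i))

/-- The defining relations of the algebra `□̂_q`. -/
inductive BoxHRel (F : Type*) [Field F] (q : F) :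
    FreeAlgebra F BHGen → FreeAlgebra F BHGen → Prop
  | c_cinv (i : ZMod 4) : BoxHRel F q (bhc F i * bhcinv F i) 1
  | cinv_c (i : ZMod 4) : BoxHRel F q (bhcinv F i * bhc F i) 1
  | central_c (i : ZMod 4) (a : FreeAlgebra F BHGen) : BoxHRel F q (bhc F i * a) (a * bhc F i)
  | central_cinv (i : ZMod 4) (a : FreeAlgebra F BHGen) :
      BoxHRel F q (bhcinv F i * a) (a * bhcinv F i)
  | weyl (i : ZMod 4) : BoxHRel F q
      ((q - q⁻¹)⁻¹ • (q • (bhx F i * bhx F (i + 1)) - q⁻¹ • (bhx F (i + 1) * bhx F i)))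
      (bhc F i)
  | serre (i : ZMod 4) : BoxHRel F q (qSerre q (bhx F i) (bhx F (i + 2))) 0

/-- The algebra `□̂_q`. -/
abbrev BoxH (F : Type*) [Field F] (q : F) := RingQuot (BoxHRel F q)

/-- The generators `x_i` of `□̂_q`. -/
def xH (F : Type*) [Field F] (q : F) (i : ZMod 4) : BoxH F q :=
  RingQuot.mkAlgHom F (BoxHRel F q) (bhx F i)

/-- The central generators `c_i` of `□̂_q`. -/
def cH (F : Type*) [Field F] (q : F) (i : ZMod 4) : BoxH F q :=
  RingQuot.mkAlgHom F (BoxHRel F q) (bhc F i)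

/-- The central generators `c_i⁻¹` of `□̂_q`. -/
def cinvH (F : Type*) [Field F] (q : F) (i : ZMod 4) : BoxH F q :=
  RingQuot.mkAlgHom F (BoxHRel F q) (bhcinv F i)

/-! ### `q`-Serre expressions of `q`-Weyl pairs -/

section QSerre

variable {F : Type*} [Field F] {q : F} {R : Type*} [Ring R] [Algebra F R]

lemma sub_inv_ne_zero (hq : q ≠ 0) (hq2 : q ^ 2 ≠ 1) : q - q⁻¹ ≠ 0 := by
  intro h
  apply hq2
  calc q ^ 2 = q * (q - q⁻¹) + q * q⁻¹ := by ring
    _ = 1 := by rw [h, mul_zero, mul_inv_cancel₀ hq, zero_add]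

lemma qThree_eq (hq : q ≠ 0) (hq2 : q ^ 2 ≠ 1) :
    (q ^ 3 - q⁻¹ ^ 3) / (q - q⁻¹) = q ^ 2 + 1 + q⁻¹ ^ 2 := by
  rw [div_eq_iff (sub_inv_ne_zero hq hq2)]
  field_simp
  ring

/-- The `q`-Weyl relation solved for `u * v`. -/
lemma weyl_mul_eq (hq : q ≠ 0) {u v c : R}
    (h : q • (u * v) - q⁻¹ • (v * u) = (q - q⁻¹) • c) :
    u * v = (q⁻¹ ^ 2) • (v * u) + (1 - q⁻¹ ^ 2) • c := by
  have h2 := congrArg (fun z => q⁻¹ • z) h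
  simp only [smul_sub, smul_smul, inv_mul_cancel₀ hq, one_smul] at h2
  rw [sub_eq_iff_eq_add] at h2
  rw [h2]
  match_scalars <;> field_simp

/-- The `q`-Weyl relation solved for `v * u`. -/
lemma weyl_mul_eq' (hq : q ≠ 0) {u v c : R}
    (h : q • (u * v) - q⁻¹ • (v * u) = (q - q⁻¹) • c) :
    v * u = (q ^ 2) • (u * v) + (1 - q ^ 2) • c := by
  have h2 := congrArg (fun z => q • z) h
  simp only [smul_sub, smul_smul, mul_inv_cancel₀ hq, one_smul] at h2
  rw [sub_eq_iff_eq_add, ← sub_eq_iff_eq_add'] at h2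
  rw [← h2]
  match_scalars <;> field_simp
  ring

/-- Summand `Z` of the second argument: `Y` is moved to the left of `X` and `Z`. -/
lemma qSerre_add_left_weyl_right (hq : q ≠ 0) (hq2 : q ^ 2 ≠ 1) {X Y Z c d : R}
    (hc : ∀ r, r * c = c * r) (hd : ∀ r, r * d = d * r)
    (hXY : q • (X * Y) - q⁻¹ • (Y * X) = (q - q⁻¹) • c)
    (hYZ : q • (Y * Z) - q⁻¹ • (Z * Y) = (q - q⁻¹) • d)
    (hXZ : qSerre q X Z = 0) :
    qSerre q (X + Y) Z = ((q ^ 2 - q⁻¹ ^ 2) ^ 2) • (c * (Z * (X + Y) - (X + Y) * Z)) := by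
  have e1 := weyl_mul_eq hq hXY
  have e2 := weyl_mul_eq' hq hYZ
  have e1' : ∀ r, X * (Y * r) = (q⁻¹ ^ 2) • (Y * (X * r)) + (1 - q⁻¹ ^ 2) • (c * r) := by
    intro r
    rw [← mul_assoc, e1]; simp only [add_mul, smul_mul_assoc, mul_assoc]
  have e2' : ∀ r, Z * (Y * r) = (q ^ 2) • (Y * (Z * r)) + (1 - q ^ 2) • (d * r) := by
    intro r
    rw [← mul_assoc, e2]; simp only [add_mul, smul_mul_assoc, mul_assoc]
  have cc : ∀ u r, u * (c * r) = c * (u * r) := by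
    intro u r
    rw [← mul_assoc, hc, mul_assoc]
  have dd : ∀ u r, u * (d * r) = d * (u * r) := by
    intro u r
    rw [← mul_assoc, hd, mul_assoc]
  rw [← sub_eq_zero]
  -- The difference of the two sides normally orders to the `q`-Serre expression of `X` and `Z`.
  refine Eq.trans ?_ hXZ
  simp only [qSerre, qThree_eq hq hq2]
  simp only [pow_succ, pow_zero, one_mul, mul_add, add_mul, mul_sub, sub_mul, mul_assoc,
    smul_mul_assoc, mul_smul_comm, e1, e2, e1', e2', hc X, hc Y, hc Z, hd X, hd Y, cc X, cc Y, cc Z,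
    dd X, dd Y, hc d, smul_add, smul_sub]
  match_scalars <;> field_simp <;> ring

/-- Summand `W` of the second argument: `X` is moved to the right of `Y` and `W`. -/
lemma qSerre_add_right_weyl_left (hq : q ≠ 0) (hq2 : q ^ 2 ≠ 1) {X Y W c d : R}
    (hc : ∀ r, r * c = c * r) (hd : ∀ r, r * d = d * r)
    (hXY : q • (X * Y) - q⁻¹ • (Y * X) = (q - q⁻¹) • c)
    (hWX : q • (W * X) - q⁻¹ • (X * W) = (q - q⁻¹) • d)
    (hYW : qSerre q Y W = 0) :
    qSerre q (X + Y) W = ((q ^ 2 - q⁻¹ ^ 2) ^ 2) • (c * (W * (X + Y) - (X + Y) * W)) := by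
  have e1 := weyl_mul_eq hq hXY
  have e2 := weyl_mul_eq' hq hWX
  have e1' : ∀ r, X * (Y * r) = (q⁻¹ ^ 2) • (Y * (X * r)) + (1 - q⁻¹ ^ 2) • (c * r) := by
    intro r
    rw [← mul_assoc, e1]; simp only [add_mul, smul_mul_assoc, mul_assoc]
  have e2' : ∀ r, X * (W * r) = (q ^ 2) • (W * (X * r)) + (1 - q ^ 2) • (d * r) := by
    intro r
    rw [← mul_assoc, e2]; simp only [add_mul, smul_mul_assoc, mul_assoc]
  have cc : ∀ u r, u * (c * r) = c * (u * r) := by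
    intro u r
    rw [← mul_assoc, hc, mul_assoc]
  have dd : ∀ u r, u * (d * r) = d * (u * r) := by
    intro u r
    rw [← mul_assoc, hd, mul_assoc]
  rw [← sub_eq_zero]
  -- The difference of the two sides normally orders to the `q`-Serre expression of `Y` and `W`.
  refine Eq.trans ?_ hYW
  simp only [qSerre, qThree_eq hq hq2]
  simp only [pow_succ, pow_zero, one_mul, mul_add, add_mul, mul_sub, sub_mul, mul_assoc,
    smul_mul_assoc, mul_smul_comm, e1, e2, e1', e2', hc X, hc Y, hc W, hd X, hd Y, cc Y, cc W,
    dd X, dd Y, hc d, smul_add, smul_sub]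
  match_scalars <;> field_simp <;> ring

lemma qSerre_add (u v w : R) : qSerre q u (v + w) = qSerre q u v + qSerre q u w := by
  simp only [qSerre, mul_add, add_mul, smul_add]
  abel

lemma qSerre_central_mul {a b : R} (ha : a ∈ Subalgebra.center F R)
    (hb : b ∈ Subalgebra.center F R) (u v : R) :
    qSerre q (a * u) (b * v) = a ^ 3 * b * qSerre q u v := by
  rw [Subalgebra.mem_center_iff] at ha hb
  have ha' : ∀ r s, r * (a * s) = a * (r * s) := by
    intro r s
    rw [← mul_assoc, ha, mul_assoc]
  have hb' : ∀ r s, r * (b * s) = b * (r * s) := by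
    intro r s
    rw [← mul_assoc, hb, mul_assoc]
  simp only [qSerre, pow_succ, pow_zero, one_mul, mul_add, mul_sub, mul_assoc, mul_smul_comm,
    ha' u, ha' v, hb' u, hb' a]

lemma weyl_central_mul {a b c : R} (ha : a ∈ Subalgebra.center F R)
    (hb : b ∈ Subalgebra.center F R) {u v : R}
    (h : q • (u * v) - q⁻¹ • (v * u) = (q - q⁻¹) • c) :
    q • (a * u * (b * v)) - q⁻¹ • (b * v * (a * u)) = (q - q⁻¹) • (a * b * c) := by
  rw [Subalgebra.mem_center_iff] at ha hb
  have e1 : a * u * (b * v) = a * b * (u * v) := by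
    rw [mul_assoc, ← mul_assoc u, hb, mul_assoc, mul_assoc]
  have e2 : b * v * (a * u) = a * b * (v * u) := by
    rw [mul_assoc, ← mul_assoc v, ha, mul_assoc, ← mul_assoc, hb]
  rw [e1, e2, ← mul_smul_comm q (a * b), ← mul_smul_comm q⁻¹, ← mul_sub, h, mul_smul_comm]

end QSerre

/-! ### The algebra `□̂_q` -/

section BoxH

variable {F : Type*} [Field F] {q : F}

lemma cH_mem_center (i : ZMod 4) : cH F q i ∈ Subalgebra.center F (BoxH F q) := by
  rw [Subalgebra.mem_center_iff]
  intro r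
  obtain ⟨a, rfl⟩ := RingQuot.mkAlgHom_surjective F (BoxHRel F q) r
  have h := RingQuot.mkAlgHom_rel F (BoxHRel.central_c (q := q) i a)
  rw [map_mul, map_mul] at h
  exact h.symm

lemma cinvH_mem_center (i : ZMod 4) : cinvH F q i ∈ Subalgebra.center F (BoxH F q) := by
  rw [Subalgebra.mem_center_iff]
  intro r
  obtain ⟨a, rfl⟩ := RingQuot.mkAlgHom_surjective F (BoxHRel F q) r
  have h := RingQuot.mkAlgHom_rel F (BoxHRel.central_cinv (q := q) i a)
  rw [map_mul, map_mul] at h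
  exact h.symm

/-- The subalgebra `Ĉ` is contained in the center. -/
lemma mem_center_of_mem_adjoin {a : BoxH F q}
    (h : a ∈ Algebra.adjoin F (Set.range (cH F q) ∪ Set.range (cinvH F q))) :
    a ∈ Subalgebra.center F (BoxH F q) := by
  refine Algebra.adjoin_le ?_ h
  rintro _ (⟨i, rfl⟩ | ⟨i, rfl⟩)
  · exact cH_mem_center i
  · exact cinvH_mem_center i

lemma xH_weyl (hq : q ≠ 0) (hq2 : q ^ 2 ≠ 1) (i : ZMod 4) :
    q • (xH F q i * xH F q (i + 1)) - q⁻¹ • (xH F q (i + 1) * xH F q i)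
      = (q - q⁻¹) • cH F q i := by
  have h := RingQuot.mkAlgHom_rel F (BoxHRel.weyl (q := q) i)
  simp only [map_smul, map_sub, map_mul] at h
  rw [inv_smul_eq_iff₀ (sub_inv_ne_zero hq hq2)] at h
  exact h

lemma xH_serre (i : ZMod 4) : qSerre q (xH F q i) (xH F q (i + 2)) = 0 := by
  have h := RingQuot.mkAlgHom_rel F (BoxHRel.serre (q := q) i)
  simp only [qSerre, map_smul, map_sub, map_add, map_mul, map_pow, map_zero] at h
  exact h

/-- The generalized `q`-Dolan/Grady relation for four cyclically consecutive generators. -/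
lemma dolanGrady_BoxH (hq : q ≠ 0) (hq2 : q ^ 2 ≠ 1) (i : ZMod 4) {a b g d : BoxH F q}
    (ha : a ∈ Subalgebra.center F (BoxH F q)) (hb : b ∈ Subalgebra.center F (BoxH F q))
    (hg : g ∈ Subalgebra.center F (BoxH F q)) (hd : d ∈ Subalgebra.center F (BoxH F q))
    {A B : BoxH F q} (hA : A = a * xH F q i + b * xH F q (i + 1))
    (hB : B = g * xH F q (i + 2) + d * xH F q (i + 3)) :
    qSerre q A B = ((q ^ 2 - q⁻¹ ^ 2) ^ 2) • (a * b * cH F q i * (B * A - A * B)) := by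
  have w0 := weyl_central_mul ha hb (xH_weyl hq hq2 i)
  have w1 := weyl_central_mul hb hg (xH_weyl hq hq2 (i + 1))
  have w3 := weyl_central_mul hd ha (xH_weyl hq hq2 (i + 3))
  have s0 := qSerre_central_mul (q := q) ha hg (xH F q i) (xH F q (i + 2))
  have s1 := qSerre_central_mul (q := q) hb hd (xH F q (i + 1)) (xH F q (i + 1 + 2))
  rw [xH_serre, mul_zero] at s0 s1
  have i2 : i + 1 + 1 = i + 2 := by rw [add_assoc]; rfl
  have i3 : i + 1 + 2 = i + 3 := by rw [add_assoc]; rfl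
  -- Indices live in `ZMod 4`, where `3 + 1 = 0`.
  have i4 : i + 3 + 1 = i := by rw [add_assoc, show (3 + 1 : ZMod 4) = 0 from rfl, add_zero]
  rw [i2] at w1
  rw [i3] at s1
  rw [i4] at w3
  have cen : ∀ {u v : BoxH F q} (j : ZMod 4), u ∈ Subalgebra.center F (BoxH F q) →
      v ∈ Subalgebra.center F (BoxH F q) → ∀ r, r * (u * v * cH F q j) = u * v * cH F q j * r :=
    fun j hu hv => Subalgebra.mem_center_iff.mp (mul_mem (mul_mem hu hv) (cH_mem_center j))
  have hZ := qSerre_add_left_weyl_right hq hq2 (cen i ha hb) (cen (i + 1) hb hg) w0 w1 s0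
  have hW := qSerre_add_right_weyl_left hq hq2 (cen i ha hb) (cen (i + 3) hd ha) w0 w3 s1
  rw [← hA] at hZ hW
  rw [hB, qSerre_add, hZ, hW, ← smul_add, ← mul_add]
  congr 2
  simp only [mul_add, add_mul]
  abel

end BoxH

/-- Corollary 9.21: in `□̂_q`, with `A = α₀x₀ + α₁x₁` and `B = α₂x₂ + α₃x₃` for invertible
elements `αᵢ` of the central subalgebra `Ĉ`, the generalized `q`-Dolan/Grady relations hold. -/
theorem stmt11 (F : Type*) [Field F] (q : F) (hq : q ≠ 0) (hq2 : q ^ 2 ≠ 1)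
    (α0 α1 α2 α3 : BoxH F q)
    (h0 : α0 ∈ Algebra.adjoin F (Set.range (cH F q) ∪ Set.range (cinvH F q)))
    (h1 : α1 ∈ Algebra.adjoin F (Set.range (cH F q) ∪ Set.range (cinvH F q)))
    (h2 : α2 ∈ Algebra.adjoin F (Set.range (cH F q) ∪ Set.range (cinvH F q)))
    (h3 : α3 ∈ Algebra.adjoin F (Set.range (cH F q) ∪ Set.range (cinvH F q)))
    (hu0 : IsUnit α0) (hu1 : IsUnit α1) (hu2 : IsUnit α2) (hu3 : IsUnit α3)
    (A B : BoxH F q)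
    (hA : A = α0 * xH F q 0 + α1 * xH F q 1) (hB : B = α2 * xH F q 2 + α3 * xH F q 3) :
    qSerre q A B = ((q ^ 2 - q⁻¹ ^ 2) ^ 2) • (α0 * α1 * cH F q 0 * (B * A - A * B)) ∧
    qSerre q B A = ((q ^ 2 - q⁻¹ ^ 2) ^ 2) • (α2 * α3 * cH F q 2 * (A * B - B * A)) := by
  have c0 := mem_center_of_mem_adjoin h0
  have c1 := mem_center_of_mem_adjoin h1
  have c2 := mem_center_of_mem_adjoin h2
  have c3 := mem_center_of_mem_adjoin h3
  -- Adding `2` to the indices modulo `4` exchanges the roles of `A` and `B`.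
  exact ⟨dolanGrady_BoxH hq hq2 0 c0 c1 c2 c3 hA hB, dolanGrady_BoxH hq hq2 2 c2 c3 c0 c1 hB hA⟩
end
end
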